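/- Let m ≥ 1, ε ∈ (0, 1], δ ∈ (0, 1), Δ > 0, and let t, t' ∈ ℝ^m satisfy ‖t − t'‖₂ ≤ Δ. Set σ = √(2 ln(1.25/δ)) · Δ/ε, and let μ_t denote the product measure on ℝ^m whose i-th factor is the Gaussian distribution N(t_i, σ²), and similarly μ_{t'}. Then μ_t is (ε, δ)-close to μ_{t'}: for every measurable set A ⊆ ℝ^m, μ_t(A) ≤ e^ε · μ_{t'}(A) + δ. -/

import Mathlib

open MeasureTheory ProbabilityTheory
open scoped ENNReal NNReal

/-- Finite products commute with densities. -/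
lemma pi_withDensity_eq {ι : Type*} [Fintype ι] {α : ι → Type*} [∀ i, MeasurableSpace (α i)]
    (μ ν : ∀ i, Measure (α i)) [∀ i, IsProbabilityMeasure (μ i)] [∀ i, IsProbabilityMeasure (ν i)]
    (f : ∀ i, α i → ℝ≥0∞) (hf : ∀ i, Measurable (f i))
    (h : ∀ i, ν i = (μ i).withDensity (f i)) :
    Measure.pi ν = (Measure.pi μ).withDensity (fun x => ∏ i, f i (x i)) := by
  refine Measure.pi_eq fun s hs => ?_
  have hind : iIndepFun (fun i (x : ∀ i, α i) => (s i).indicator (f i) (x i)) (Measure.pi μ) :=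
    iIndepFun_pi (X := fun i => (s i).indicator (f i))
      fun i => ((hf i).indicator (hs i)).aemeasurable
  have hm (i : ι) : Measurable fun x : (∀ i, α i) => (s i).indicator (f i) (x i) :=
    ((hf i).indicator (hs i)).comp (measurable_pi_apply i)
  rw [withDensity_apply _ (MeasurableSet.univ_pi hs),
    ← lintegral_indicator (MeasurableSet.univ_pi hs)]
  have hprod : (Set.univ.pi s).indicator (fun x => ∏ i, f i (x i)) =
      fun x => ∏ i, (s i).indicator (f i) (x i) := by
    ext x
    by_cases hx : x ∈ Set.univ.pi s
    · rw [Set.indicator_of_mem hx]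
      exact Finset.prod_congr rfl fun i _ => (Set.indicator_of_mem (hx i trivial) _).symm
    · rw [Set.indicator_of_notMem hx]
      obtain ⟨i, hi⟩ : ∃ i, x i ∉ s i := by simpa using hx
      exact (Finset.prod_eq_zero (Finset.mem_univ i) (Set.indicator_of_notMem hi _)).symm
  rw [hprod, lintegral_prod_eq_prod_lintegral_of_indepFun _ _ hind hm]
  refine Finset.prod_congr rfl fun i _ => ?_
  rw [h i, withDensity_apply _ (hs i), ← lintegral_indicator (hs i)]
  exact (measurePreserving_eval μ i).lintegral_comp ((hf i).indicator (hs i))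

/-- Density of a Gaussian with respect to another one with the same variance. -/
lemma gaussianReal_eq_withDensity (a b : ℝ) {v : ℝ≥0} (hv : v ≠ 0) :
    gaussianReal a v = (gaussianReal b v).withDensity
      (fun x => ENNReal.ofReal (Real.exp (((x - b) ^ 2 - (x - a) ^ 2) / (2 * v)))) := by
  rw [gaussianReal_of_var_ne_zero _ hv, gaussianReal_of_var_ne_zero _ hv,
    ← withDensity_mul _ (measurable_gaussianPDF b v) (by fun_prop)]
  congr 1
  ext x
  rw [Pi.mul_apply, gaussianPDF, gaussianPDF, ← ENNReal.ofReal_mul (gaussianPDFReal_nonneg _ _ _),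
    gaussianPDFReal, gaussianPDFReal, mul_assoc (√_)⁻¹, ← Real.exp_add]
  congr 3
  ring

/-- A linear functional of a Gaussian vector with independent coordinates is Gaussian. -/
lemma map_sum_pi_gaussianReal {ι : Type*} [Fintype ι] (t a : ι → ℝ) (v w : ℝ≥0)
    (hw : (w : ℝ) = v * ∑ i, a i ^ 2) :
    (Measure.pi fun i => gaussianReal (t i) v).map (fun x => ∑ i, (x i - t i) * a i) =
      gaussianReal 0 w := by
  set P := Measure.pi fun i => gaussianReal (t i) v
  have hind : iIndepFun (fun i (x : ι → ℝ) => (x i - t i) * a i) P :=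
    iIndepFun_pi (X := fun i x => (x - t i) * a i) fun i => by fun_prop
  have hmap (i : ι) : P.map (fun x => (x i - t i) * a i) =
      gaussianReal 0 (NNReal.mk (a i ^ 2) (sq_nonneg _) * v) := by
    have h1 : P.map (fun x => x i) = gaussianReal (t i) v :=
      (measurePreserving_eval (fun i => gaussianReal (t i) v) i).map_eq
    have h2 : (fun x : ι → ℝ => (x i - t i) * a i) =
        (fun y => y * a i) ∘ (fun y => y - t i) ∘ fun x => x i := rfl
    rw [h2, ← Measure.map_map (by fun_prop) (by fun_prop),
      ← Measure.map_map (by fun_prop) (by fun_prop), h1, gaussianReal_map_sub_const,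
      gaussianReal_map_mul_const]
    simp
  apply Measure.ext_of_charFun
  have hm (i : ι) : Measurable fun x : ι → ℝ => (x i - t i) * a i := by fun_prop
  rw [hind.charFun_map_fun_sum_eq_prod fun i => (hm i).aemeasurable]
  ext s
  simp_rw [Finset.prod_apply, hmap, charFun_gaussianReal, ← Complex.exp_sum]
  have hw' : (w : ℂ) = v * ∑ i, (a i : ℂ) ^ 2 := by exact_mod_cast congrArg Complex.ofReal hw
  rw [hw']
  congr 1
  simp [Finset.mul_sum, Finset.sum_mul, Finset.sum_div]
  exact Finset.sum_congr rfl fun i _ => by ring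

lemma gaussianReal_zero_one_Ioi_zero : gaussianReal 0 1 (Set.Ioi 0) ≤ ENNReal.ofReal (1 / 2) := by
  have hneg : gaussianReal 0 1 (Set.Iio 0) = gaussianReal 0 1 (Set.Ioi 0) := by
    conv_lhs =>
      rw [← neg_zero, ← gaussianReal_map_neg, Measure.map_apply (by fun_prop) measurableSet_Iio]
    congr 1
    ext x
    simp
  have hdisj : Disjoint (Set.Iio (0 : ℝ)) (Set.Ioi 0) :=
    Set.disjoint_left.2 fun x hx hx' => lt_asymm (Set.mem_Iio.1 hx) hx'
  have hle : gaussianReal 0 1 (Set.Ioi 0) + gaussianReal 0 1 (Set.Ioi 0) ≤ 1 := by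
    nth_rewrite 1 [← hneg]
    rw [← measure_union hdisj measurableSet_Ioi]
    exact prob_le_one
  rw [one_div, ENNReal.ofReal_inv_of_pos two_pos, ENNReal.ofReal_ofNat,
    ENNReal.le_inv_iff_mul_le, mul_two]
  exact hle

/-- Sharp sub-Gaussian bound on the upper tail of the standard Gaussian. -/
lemma gaussianReal_Ioi_le_of_nonneg {u : ℝ} (hu : 0 ≤ u) :
    gaussianReal 0 1 (Set.Ioi u) ≤ ENNReal.ofReal (Real.exp (-u ^ 2 / 2) / 2) := by
  have hshift : gaussianReal 0 1 (Set.Ioi u) = gaussianReal (-u) 1 (Set.Ioi 0) := by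
    rw [← zero_sub, ← gaussianReal_map_sub_const, Measure.map_apply (by fun_prop) measurableSet_Ioi]
    congr 1
    ext x
    simp
  rw [hshift, gaussianReal_eq_withDensity (-u) 0 one_ne_zero, withDensity_apply _ measurableSet_Ioi]
  calc _ ≤ ∫⁻ _ in Set.Ioi (0 : ℝ), ENNReal.ofReal (Real.exp (-u ^ 2 / 2)) ∂gaussianReal 0 1 := by
        refine setLIntegral_mono measurable_const fun x hx => ?_
        have : 0 ≤ x * u := mul_nonneg (le_of_lt hx) hu
        refine ENNReal.ofReal_le_ofReal (Real.exp_le_exp.2 ?_)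
        rw [NNReal.coe_one]
        nlinarith
    _ ≤ ENNReal.ofReal (Real.exp (-u ^ 2 / 2)) * ENNReal.ofReal (1 / 2) := by
        rw [setLIntegral_const]
        gcongr
        exact gaussianReal_zero_one_Ioi_zero
    _ = _ := by rw [← ENNReal.ofReal_mul (Real.exp_nonneg _), mul_one_div]

lemma gaussianReal_Ioi_le_of_nonpos {u : ℝ} (hu : u ≤ 0) :
    gaussianReal 0 1 (Set.Ioi u) ≤ ENNReal.ofReal (1 / 2 - u) := by
  have hpdf (x : ℝ) : gaussianPDF 0 1 x ≤ 1 := by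
    rw [gaussianPDF, ← ENNReal.ofReal_one]
    refine ENNReal.ofReal_le_ofReal ?_
    rw [gaussianPDFReal]
    refine mul_le_one₀ (inv_le_one_of_one_le₀ ?_) (Real.exp_nonneg _) (Real.exp_le_one_iff.2 ?_)
    · rw [Real.one_le_sqrt, NNReal.coe_one]
      linarith [Real.pi_gt_three]
    · exact div_nonpos_of_nonpos_of_nonneg (neg_nonpos.2 (sq_nonneg _)) (by positivity)
  rw [← Set.Ioc_union_Ioi_eq_Ioi hu]
  calc _ ≤ gaussianReal 0 1 (Set.Ioc u 0) + gaussianReal 0 1 (Set.Ioi 0) := measure_union_le _ _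
    _ ≤ ENNReal.ofReal (-u) + ENNReal.ofReal (1 / 2) := by
        gcongr
        · rw [gaussianReal_apply _ one_ne_zero]
          calc _ ≤ ∫⁻ _ in Set.Ioc u 0, 1 := lintegral_mono hpdf
            _ = _ := by simp
        · exact gaussianReal_zero_one_Ioi_zero
    _ = _ := by
        rw [← ENNReal.ofReal_add (by linarith) (by norm_num)]
        congr 1
        ring

/-- The tail bound behind the calibration `c = √(2 ln(1.25/δ))` of the Gaussian mechanism. -/
lemma gaussianReal_Ioi_calibrated_le {δ c : ℝ} (hδ : δ ∈ Set.Ioo (0 : ℝ) 1)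
    (hc : c = √(2 * Real.log (1.25 / δ))) :
    gaussianReal 0 1 (Set.Ioi (c - 1 / (2 * c))) ≤ ENNReal.ofReal δ := by
  obtain ⟨hδ0, hδ1⟩ := hδ
  have hq : 1.25 < 1.25 / δ := by rw [lt_div_iff₀ hδ0]; linarith
  have hlog : 0.2 ≤ Real.log (1.25 / δ) := by
    have h1 := Real.one_sub_inv_le_log_of_pos (show (0 : ℝ) < 1.25 by norm_num)
    have h2 := Real.log_lt_log (by norm_num) hq
    norm_num at h1 h2 ⊢
    linarith
  have hc2 : c ^ 2 = 2 * Real.log (1.25 / δ) := by rw [hc, Real.sq_sqrt (by linarith)]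
  have hc0 : 0.6 < c := by
    rw [hc]
    exact Real.lt_sqrt_of_sq_lt (by linarith)
  have hexp : Real.exp (-c ^ 2 / 2) = δ / 1.25 := by
    rw [show -c ^ 2 / 2 = -Real.log (1.25 / δ) by rw [neg_div, hc2]; ring, Real.exp_neg,
      Real.exp_log (by positivity), inv_div]
  have hcc : c * (1 / (2 * c)) = 1 / 2 := by field_simp
  rcases le_or_gt 0 (c - 1 / (2 * c)) with hu | hu
  · refine (gaussianReal_Ioi_le_of_nonneg hu).trans (ENNReal.ofReal_le_ofReal ?_)
    have h1 : Real.exp (-(c - 1 / (2 * c)) ^ 2 / 2) ≤ Real.exp (1 / 2) * (δ / 1.25) := by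
      rw [← hexp, ← Real.exp_add]
      gcongr
      nlinarith [sq_nonneg (1 / (2 * c))]
    have h2 : Real.exp (1 / 2) ≤ 2.5 := by
      have hsq : Real.exp (1 / 2) ^ 2 = Real.exp 1 := by
        rw [← Real.exp_nat_mul]
        norm_num
      nlinarith [Real.exp_one_lt_d9]
    have h3 : Real.exp (1 / 2) * (δ / 1.25) ≤ 2.5 * (δ / 1.25) := by gcongr
    have h4 : 2.5 * (δ / 1.25) = 2 * δ := by ring
    linarith
  · refine (gaussianReal_Ioi_le_of_nonpos hu.le).trans (ENNReal.ofReal_le_ofReal ?_)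
    have h1 : 1 / (2 * c) ≤ 1 / 1.2 := by gcongr; linarith
    have h2 : c ^ 2 < 1 / 2 := by nlinarith
    have h3 := Real.add_one_le_exp (-c ^ 2 / 2)
    rw [hexp] at h3
    norm_num at h1 h3 ⊢
    linarith

/-- The Gaussian mechanism is `(ε, δ)`-differentially private: if `‖t - t'‖₂ ≤ Δ`
and `σ = √(2 ln(1.25/δ)) Δ/ε`, then the product of Gaussians `N(tᵢ, σ²)` is
`(ε, δ)`-close to the product of Gaussians `N(t'ᵢ, σ²)`. -/
theorem gaussian_mechanism_dp
    {m : ℕ} (hm : 1 ≤ m) (ε δ Δ : ℝ) (hε : ε ∈ Set.Ioc (0:ℝ) 1)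
    (hδ : δ ∈ Set.Ioo (0:ℝ) 1) (hΔ : 0 < Δ)
    (t t' : Fin m → ℝ) (hsens : Real.sqrt (∑ i, (t i - t' i) ^ 2) ≤ Δ)
    (σ : ℝ) (hσ : σ = Real.sqrt (2 * Real.log (1.25 / δ)) * Δ / ε) :
    ∀ A : Set (Fin m → ℝ), MeasurableSet A →
      Measure.pi (fun i => gaussianReal (t i) (Real.toNNReal (σ ^ 2))) A ≤
        ENNReal.ofReal (Real.exp ε) *
          Measure.pi (fun i => gaussianReal (t' i) (Real.toNNReal (σ ^ 2))) A
          + ENNReal.ofReal δ := by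
  intro A hA
  obtain ⟨hε0, hε1⟩ := hε
  set c := √(2 * Real.log (1.25 / δ)) with hc
  have hc0 : 0 < c := by
    refine Real.sqrt_pos.2 (mul_pos two_pos (Real.log_pos ?_))
    rw [lt_div_iff₀ hδ.1]
    linarith [hδ.2]
  have hσ0 : 0 < σ := by rw [hσ]; positivity
  set v := Real.toNNReal (σ ^ 2) with hv
  have hvσ : (v : ℝ) = σ ^ 2 := Real.coe_toNNReal _ (sq_nonneg _)
  have hv0 : v ≠ 0 := by
    rw [hv]
    exact (Real.toNNReal_pos.2 (by positivity)).ne'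
  set P := Measure.pi fun i => gaussianReal (t i) v
  set Q := Measure.pi fun i => gaussianReal (t' i) v
  set d := √(∑ i, (t i - t' i) ^ 2)
  have hd2 : d ^ 2 = ∑ i, (t i - t' i) ^ 2 :=
    Real.sq_sqrt (Finset.sum_nonneg fun i _ => sq_nonneg _)
  have hd0 : 0 ≤ d := Real.sqrt_nonneg _
  rcases hd0.eq_or_lt with hd | hd
  · have htt : t = t' := by
      rw [← hd, zero_pow two_ne_zero] at hd2
      ext i
      have := (Finset.sum_eq_zero_iff_of_nonneg fun i _ => sq_nonneg _).1 hd2.symm i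
        (Finset.mem_univ i)
      exact sub_eq_zero.1 (pow_eq_zero_iff two_ne_zero |>.1 this)
    have hPQ : P = Q := by simp only [P, Q, htt]
    rw [hPQ]
    refine le_add_right (le_mul_of_one_le_left' ?_)
    rw [ENNReal.one_le_ofReal]
    exact Real.one_le_exp hε0.le
  set L : (Fin m → ℝ) → ℝ :=
    fun x => ∑ i, ((x i - t' i) ^ 2 - (x i - t i) ^ 2) / (2 * v) with hL
  have hLm : Measurable L := by fun_prop
  have hPd : P = Q.withDensity fun x => ENNReal.ofReal (Real.exp (L x)) := by
    have := pi_withDensity_eq (fun i => gaussianReal (t' i) v) (fun i => gaussianReal (t i) v) _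
      (fun i => by fun_prop) fun i => gaussianReal_eq_withDensity (t i) (t' i) hv0
    simp only [P, Q, this]
    congr 1
    ext x
    rw [← ENNReal.ofReal_prod_of_nonneg fun i _ => Real.exp_nonneg _, ← Real.exp_sum]
  set a : Fin m → ℝ := fun i => (t i - t' i) / (σ * d) with ha
  set Y : (Fin m → ℝ) → ℝ := fun x => ∑ i, (x i - t i) * a i
  have hY : P.map Y = gaussianReal 0 1 := by
    refine map_sum_pi_gaussianReal t a v 1 ?_
    simp only [ha, div_pow, ← Finset.sum_div, ← hd2, hvσ, NNReal.coe_one]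
    field_simp
  have hLY (x : Fin m → ℝ) : L x = Y x * (d / σ) + d ^ 2 / (2 * σ ^ 2) := by
    simp only [hL, Y, ha, hd2, hvσ, Finset.sum_mul, Finset.sum_div, ← Finset.sum_add_distrib]
    refine Finset.sum_congr rfl fun i _ => ?_
    field_simp
    ring
  have hbad : P {x | ε < L x} ≤ ENNReal.ofReal δ := by
    refine le_trans ?_ (gaussianReal_Ioi_calibrated_le hδ hc)
    rw [← hY, Measure.map_apply (by fun_prop) measurableSet_Ioi]
    refine measure_mono fun x hx => ?_
    simp only [Set.mem_ofPred_eq, hLY] at hx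
    have hdσ : d / σ ≤ ε / c := by
      rw [hσ, div_le_div_iff₀ (by positivity) hc0]
      field_simp
      exact hsens
    have hs : 0 < d / σ := by positivity
    have hsc : d / σ * c ≤ ε := (le_div_iff₀ hc0).1 hdσ
    have hinv : d / σ ≤ 1 / c := hdσ.trans (by gcongr)
    have hsq : d ^ 2 / (2 * σ ^ 2) = d / σ * (d / σ) / 2 := by field_simp
    rw [hsq] at hx
    simp only [Set.mem_preimage, Set.mem_Ioi]
    have hhalf : 1 / (2 * c) = 1 / c / 2 := by field_simp
    rw [hhalf]
    by_contra! hYx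
    have := mul_le_mul_of_nonneg_left hYx hs.le
    have := mul_le_mul_of_nonneg_left hinv hs.le
    linarith
  have hgood : P (A \ {x | ε < L x}) ≤ ENNReal.ofReal (Real.exp ε) * Q A := by
    have hm : MeasurableSet (A \ {x | ε < L x}) :=
      hA.diff (measurableSet_lt measurable_const hLm)
    rw [hPd, withDensity_apply _ hm]
    calc _ ≤ ∫⁻ _ in A \ {x | ε < L x}, ENNReal.ofReal (Real.exp ε) ∂Q := by
          refine setLIntegral_mono measurable_const fun x hx => ?_
          gcongr
          exact not_lt.1 hx.2
      _ ≤ _ := by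
          rw [setLIntegral_const]
          gcongr
          exact Set.sdiff_subset
  calc P A ≤ P (A \ {x | ε < L x}) + P {x | ε < L x} := by
        refine (measure_mono ?_).trans (measure_union_le _ _)
        rw [Set.sdiff_union_self]
        exact Set.subset_union_left
    _ ≤ _ := add_le_add hgood hbad
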